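/- arXiv:0709.4403 — 2 statements merged into one kernel-verified Lean document; each statement's English description precedes it below -/
import Mathlib

section
/- For all 3×3 complex matrices X₁, X₂, X₃, X₄, X₅, X₆ the following trace identity holds: t(1,2,3,4,5,6) + t(1,2,3,5,4,6) + t(4,1,2,3,5,6) + t(4,5,1,2,3,6) + t(5,1,2,3,4,6) + t(5,4,1,2,3,6) = t(4)t(5)t(6)t(1,2,3) − t(6)t(4,5)t(1,2,3) − t(5)t(4,6)t(1,2,3) − t(4)t(5,6)t(1,2,3) + t(5,4,6)t(1,2,3) + t(5,6,4)t(1,2,3) − t(5)t(6)t(1,2,3,4) + t(5,6)t(1,2,3,4) − t(4)t(6)t(1,2,3,5) + t(4,6)t(1,2,3,5) − t(4)t(5)t(1,2,3,6) + t(4,5)t(1,2,3,6) + t(6)t(1,2,3,4,5) + t(5)t(1,2,3,4,6) + t(6)t(1,2,3,5,4) + t(4)t(1,2,3,5,6) + t(5)t(1,2,3,6,4) + t(4)t(1,2,3,6,5). -/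
open Matrix

/-
The alternating sum over `σ` of the products of traces along the cycles of `σ` is a sum of
determinants `det (M i (f i) (f j))` over all index maps `f : ι → n`. When `ι` is larger than `n`,
no `f` is injective, so each of these determinants has a repeated column and the sum vanishes.
Sorting the permutations by the cycle through the first letter expands the sum into traces of words.
For four letters, and matrices of size at most three, this is the fundamental trace relation, which
is applied to the letters `X₁X₂X₃, X₄, X₅, X₆`.
-/

section PermTrace

variable {n R : Type*} [Fintype n] [CommSemiring R]

/-- The product of `trace (M i₁ * ⋯ * M iₖ)` over the cycles `(i₁ ⋯ iₖ)` of `σ`, fixed points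
included. It is encoded as a single sum over index maps, which avoids choosing a first letter in
each cycle. -/
def permTrace {ι : Type*} [Fintype ι] [DecidableEq ι] (M : ι → Matrix n n R)
    (σ : Equiv.Perm ι) : R :=
  ∑ f : ι → n, ∏ i, M i (f i) (f (σ i))

variable {k : ℕ}

theorem permTrace_cons (A : Matrix n n R) (M : Fin k → Matrix n n R)
    (σ : Equiv.Perm (Fin (k + 1))) :
    permTrace (vecCons A M) σ = ∑ f : Fin k → n, ∑ a, A a (vecCons a f (σ 0)) *
      ∏ i, M i (f i) (vecCons a f (σ i.succ)) := by
  rw [permTrace, ← (Fin.consEquiv fun _ => n).sum_comp, Fintype.sum_prod_type, Finset.sum_comm]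
  simp only [Fin.prod_univ_succ]
  rfl

theorem permTrace_cons_decomposeFin_symm_zero (A : Matrix n n R) (M : Fin k → Matrix n n R)
    (τ : Equiv.Perm (Fin k)) :
    permTrace (vecCons A M) (Equiv.Perm.decomposeFin.symm (0, τ)) = trace A * permTrace M τ := by
  rw [permTrace_cons, permTrace, Finset.mul_sum]
  simp [trace, Finset.sum_mul]

-- `decomposeFin.symm ((τ i).succ, τ)` inserts the new letter into a cycle of `τ`, right after `i`.
theorem permTrace_cons_decomposeFin_symm_succ (A : Matrix n n R) (M : Fin k → Matrix n n R)
    (τ : Equiv.Perm (Fin k)) (i : Fin k) :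
    permTrace (vecCons A M) (Equiv.Perm.decomposeFin.symm ((τ i).succ, τ)) =
      permTrace (Function.update M i (M i * A)) τ := by
  rw [permTrace_cons, permTrace]
  refine Finset.sum_congr rfl fun f _ => ?_
  have entry (a : n) (j : Fin k) (hj : j ≠ i) :
      vecCons a f (Equiv.Perm.decomposeFin.symm ((τ i).succ, τ) j.succ) = f (τ j) := by
    rw [Equiv.Perm.decomposeFin_symm_apply_succ, Equiv.swap_apply_of_ne_of_ne (Fin.succ_ne_zero _)
      ((Fin.succ_injective k).ne (τ.injective.ne hj)), cons_val_succ]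
  rw [← Finset.mul_prod_erase _ _ (Finset.mem_univ i), Function.update_self, mul_apply,
    Finset.sum_mul]
  refine Finset.sum_congr rfl fun a _ => ?_
  rw [← Finset.mul_prod_erase _ _ (Finset.mem_univ i), Equiv.Perm.decomposeFin_symm_apply_zero,
    Equiv.Perm.decomposeFin_symm_apply_succ, Equiv.swap_apply_right, cons_val_zero, cons_val_succ,
    mul_left_comm, ← mul_assoc]
  congr 1
  refine Finset.prod_congr rfl fun j hj => ?_
  have hji : j ≠ i := Finset.ne_of_mem_erase hj
  rw [entry a j hji, Function.update_of_ne hji]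

end PermTrace

section AlternatingTrace

variable {ι n R : Type*} [Fintype ι] [DecidableEq ι] [Fintype n] [CommRing R]

/-- The signed sum of `permTrace M σ` over all permutations `σ` of the letters. When
there is one letter more than the size of the matrices, its vanishing is the polarized
Cayley–Hamilton theorem multiplied by the extra letter and traced. -/
def alternatingTrace (M : ι → Matrix n n R) : R :=
  ∑ σ : Equiv.Perm ι, Equiv.Perm.sign σ • permTrace M σ

theorem alternatingTrace_eq_sum_det (M : ι → Matrix n n R) :
    alternatingTrace M = ∑ f : ι → n, det (of fun i j => M i (f i) (f j)) := by
  simp only [alternatingTrace, permTrace, Finset.smul_sum]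
  rw [Finset.sum_comm]
  refine Finset.sum_congr rfl fun f _ => ?_
  rw [← det_transpose, det_apply]
  rfl

theorem alternatingTrace_eq_zero_of_card_lt (h : Fintype.card n < Fintype.card ι)
    (M : ι → Matrix n n R) : alternatingTrace M = 0 := by
  rw [alternatingTrace_eq_sum_det]
  refine Finset.sum_eq_zero fun f _ => ?_
  obtain ⟨i, j, hij, hf⟩ := Fintype.exists_ne_map_eq_of_card_lt f h
  exact det_zero_of_column_eq hij fun k => by simp only [of_apply, hf]

variable {k : ℕ}

theorem alternatingTrace_fin_zero (M : Fin 0 → Matrix n n R) : alternatingTrace M = 1 := by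
  simp [alternatingTrace, permTrace]

theorem alternatingTrace_cons (A : Matrix n n R) (M : Fin k → Matrix n n R) :
    alternatingTrace (vecCons A M) =
      trace A * alternatingTrace M - ∑ i, alternatingTrace (Function.update M i (M i * A)) := by
  have insert_letter (τ : Equiv.Perm (Fin k)) :
      ∑ p, Equiv.Perm.sign (Equiv.Perm.decomposeFin.symm (p, τ)) •
          permTrace (vecCons A M) (Equiv.Perm.decomposeFin.symm (p, τ)) =
        Equiv.Perm.sign τ • (trace A * permTrace M τ) -
          ∑ i, Equiv.Perm.sign τ • permTrace (Function.update M i (M i * A)) τ := by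
    rw [Fin.sum_univ_succ, ← Equiv.sum_comp τ]
    simp [permTrace_cons_decomposeFin_symm_zero, permTrace_cons_decomposeFin_symm_succ,
      sub_eq_add_neg]
  rw [alternatingTrace, ← Equiv.Perm.decomposeFin.symm.sum_comp, Fintype.sum_prod_type_right]
  simp only [insert_letter, alternatingTrace, Finset.sum_sub_distrib, Finset.mul_sum, mul_smul_comm]
  rw [Finset.sum_comm (γ := Fin k)]

end AlternatingTrace

section FourLetters

theorem update_vecCons_zero {α : Type*} {k : ℕ} (a b : α) (v : Fin k → α) :
    Function.update (vecCons a v) 0 b = vecCons b v :=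
  Fin.update_cons_zero (α := fun _ => α) a v b

theorem update_vecCons_succ {α : Type*} {k : ℕ} (a b : α) (v : Fin k → α) (i : Fin k) :
    Function.update (vecCons a v) i.succ b = vecCons a (Function.update v i b) :=
  (Fin.cons_update (α := fun _ => α) a v i b).symm

variable {n R : Type*} [Fintype n] [CommRing R]

theorem alternatingTrace_four (U A B C : Matrix n n R) :
    alternatingTrace ![C, B, A, U] =
      trace A * trace B * trace C * trace U - trace C * trace (A * B) * trace U
      - trace B * trace (A * C) * trace U - trace A * trace (B * C) * trace U
      + trace (A * B * C) * trace U + trace (A * C * B) * trace U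
      - (trace B * trace C - trace (B * C)) * trace (U * A)
      - (trace A * trace C - trace (A * C)) * trace (U * B)
      - (trace A * trace B - trace (A * B)) * trace (U * C)
      + trace A * (trace (U * B * C) + trace (U * C * B))
      + trace B * (trace (U * A * C) + trace (U * C * A))
      + trace C * (trace (U * A * B) + trace (U * B * A))
      - (trace (U * A * B * C) + trace (U * A * C * B) + trace (U * B * A * C)
        + trace (U * B * C * A) + trace (U * C * A * B) + trace (U * C * B * A)) := by
  simp only [alternatingTrace_cons, alternatingTrace_fin_zero, Fin.sum_univ_succ, Fin.sum_univ_zero,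
    update_vecCons_zero, update_vecCons_succ, cons_val_zero, cons_val_succ, ← Matrix.mul_assoc]
  ring

theorem fundamental_trace_relation (hn : Fintype.card n ≤ 3) (U A B C : Matrix n n R) :
    trace (U * A * B * C) + trace (U * A * C * B) + trace (U * B * A * C)
        + trace (U * B * C * A) + trace (U * C * A * B) + trace (U * C * B * A) =
      trace A * trace B * trace C * trace U - trace C * trace (A * B) * trace U
      - trace B * trace (A * C) * trace U - trace A * trace (B * C) * trace U
      + trace (A * B * C) * trace U + trace (A * C * B) * trace U
      - (trace B * trace C - trace (B * C)) * trace (U * A)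
      - (trace A * trace C - trace (A * C)) * trace (U * B)
      - (trace A * trace B - trace (A * B)) * trace (U * C)
      + trace A * (trace (U * B * C) + trace (U * C * B))
      + trace B * (trace (U * A * C) + trace (U * C * A))
      + trace C * (trace (U * A * B) + trace (U * B * A)) := by
  have vanishing : alternatingTrace ![C, B, A, U] = 0 :=
    alternatingTrace_eq_zero_of_card_lt (by simpa [Nat.lt_succ_iff] using hn) _
  linear_combination alternatingTrace_four U A B C - vanishing

end FourLetters

theorem six_letter_trace_identity_one_general {n R : Type*} [Fintype n] [CommRing R]
    (hn : Fintype.card n ≤ 3) (X₁ X₂ X₃ X₄ X₅ X₆ : Matrix n n R) :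
    trace (X₁*X₂*X₃*X₄*X₅*X₆) + trace (X₁*X₂*X₃*X₅*X₄*X₆)
      + trace (X₄*X₁*X₂*X₃*X₅*X₆) + trace (X₄*X₅*X₁*X₂*X₃*X₆)
      + trace (X₅*X₁*X₂*X₃*X₄*X₆) + trace (X₅*X₄*X₁*X₂*X₃*X₆)
    =
      trace X₄ * trace X₅ * trace X₆ * trace (X₁*X₂*X₃)
      - trace X₆ * trace (X₄*X₅) * trace (X₁*X₂*X₃)
      - trace X₅ * trace (X₄*X₆) * trace (X₁*X₂*X₃)
      - trace X₄ * trace (X₅*X₆) * trace (X₁*X₂*X₃)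
      + trace (X₅*X₄*X₆) * trace (X₁*X₂*X₃)
      + trace (X₅*X₆*X₄) * trace (X₁*X₂*X₃)
      - trace X₅ * trace X₆ * trace (X₁*X₂*X₃*X₄)
      + trace (X₅*X₆) * trace (X₁*X₂*X₃*X₄)
      - trace X₄ * trace X₆ * trace (X₁*X₂*X₃*X₅)
      + trace (X₄*X₆) * trace (X₁*X₂*X₃*X₅)
      - trace X₄ * trace X₅ * trace (X₁*X₂*X₃*X₆)
      + trace (X₄*X₅) * trace (X₁*X₂*X₃*X₆)
      + trace X₆ * trace (X₁*X₂*X₃*X₄*X₅)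
      + trace X₅ * trace (X₁*X₂*X₃*X₄*X₆)
      + trace X₆ * trace (X₁*X₂*X₃*X₅*X₄)
      + trace X₄ * trace (X₁*X₂*X₃*X₅*X₆)
      + trace X₅ * trace (X₁*X₂*X₃*X₆*X₄)
      + trace X₄ * trace (X₁*X₂*X₃*X₆*X₅) := by
  have rotate (U A B C : Matrix n n R) : trace (A * U * B * C) = trace (U * B * C * A) := by
    rw [trace_mul_comm _ A]
    simp only [Matrix.mul_assoc]
  have rotate_two (U A B C : Matrix n n R) : trace (A * B * U * C) = trace (U * C * A * B) := by
    rw [Matrix.mul_assoc (U * C), trace_mul_comm (U * C)]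
    simp only [Matrix.mul_assoc]
  have relation := fundamental_trace_relation hn (X₁ * X₂ * X₃) X₄ X₅ X₆
  rw [← rotate _ X₄ X₅ X₆, ← rotate _ X₅ X₄ X₆, ← rotate_two _ X₄ X₅ X₆, ← rotate_two _ X₅ X₄ X₆,
    trace_mul_cycle X₄ X₆ X₅, ← trace_mul_cycle X₅ X₆ X₄] at relation
  simp only [← Matrix.mul_assoc] at relation ⊢
  linear_combination relation

/-- A six-letter trace identity obtained from the fundamental relation with `U = X₁X₂X₃`. -/
theorem six_letter_trace_identity_one (X₁ X₂ X₃ X₄ X₅ X₆ : Matrix (Fin 3) (Fin 3) ℂ) :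
    trace (X₁*X₂*X₃*X₄*X₅*X₆) + trace (X₁*X₂*X₃*X₅*X₄*X₆)
      + trace (X₄*X₁*X₂*X₃*X₅*X₆) + trace (X₄*X₅*X₁*X₂*X₃*X₆)
      + trace (X₅*X₁*X₂*X₃*X₄*X₆) + trace (X₅*X₄*X₁*X₂*X₃*X₆)
    =
      trace X₄ * trace X₅ * trace X₆ * trace (X₁*X₂*X₃)
      - trace X₆ * trace (X₄*X₅) * trace (X₁*X₂*X₃)
      - trace X₅ * trace (X₄*X₆) * trace (X₁*X₂*X₃)
      - trace X₄ * trace (X₅*X₆) * trace (X₁*X₂*X₃)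
      + trace (X₅*X₄*X₆) * trace (X₁*X₂*X₃)
      + trace (X₅*X₆*X₄) * trace (X₁*X₂*X₃)
      - trace X₅ * trace X₆ * trace (X₁*X₂*X₃*X₄)
      + trace (X₅*X₆) * trace (X₁*X₂*X₃*X₄)
      - trace X₄ * trace X₆ * trace (X₁*X₂*X₃*X₅)
      + trace (X₄*X₆) * trace (X₁*X₂*X₃*X₅)
      - trace X₄ * trace X₅ * trace (X₁*X₂*X₃*X₆)
      + trace (X₄*X₅) * trace (X₁*X₂*X₃*X₆)
      + trace X₆ * trace (X₁*X₂*X₃*X₄*X₅)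
      + trace X₅ * trace (X₁*X₂*X₃*X₄*X₆)
      + trace X₆ * trace (X₁*X₂*X₃*X₅*X₄)
      + trace X₄ * trace (X₁*X₂*X₃*X₅*X₆)
      + trace X₅ * trace (X₁*X₂*X₃*X₆*X₄)
      + trace X₄ * trace (X₁*X₂*X₃*X₆*X₅) :=
  six_letter_trace_identity_one_general (by simp) X₁ X₂ X₃ X₄ X₅ X₆
end

section
/- For all 3×3 complex matrices X, U, V, W and Z, one has the matrix identity 6·X²ZWUV = pol₃(X,U,V,W,Z). -/
open Matrix

/-- The polarization of the Cayley-Hamilton polynomial for 3x3 complex matrices. -/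
noncomputable def pol (X Y : Matrix (Fin 3) (Fin 3) ℂ) : Matrix (Fin 3) (Fin 3) ℂ :=
  (trace X) • (Y * X + X * Y) + (trace (X * Y) - trace X * trace Y) • X
    + ((trace (X * X) - (trace X) ^ 2) / 2) • Y
    + (trace (Y * X * X) - trace X * trace (X * Y)
        + trace Y * (((trace X) ^ 2 - trace (X * X)) / 2)) • (1 : Matrix (Fin 3) (Fin 3) ℂ)
    + (trace Y) • (X * X)

/-- Step 1 polynomial of the reduction algorithm. -/
noncomputable def pol₂ (X Y Z : Matrix (Fin 3) (Fin 3) ℂ) : Matrix (Fin 3) (Fin 3) ℂ :=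
  pol Y (X * X * Z) + X * pol Y (X * Z) - pol X (Y * Y) * Z - pol X Y * Z * Y
    + (X * X) * pol Y Z

/-- Intermediate polynomial of STEP 2. -/
noncomputable def prepol₃ (X U V Z : Matrix (Fin 3) (Fin 3) ℂ) : Matrix (Fin 3) (Fin 3) ℂ :=
  pol₂ X (U + V) Z - pol₂ X U Z - pol₂ X V Z

/-- STEP 2 polynomial of the reduction algorithm. -/
noncomputable def pol₃ (X U V W Z : Matrix (Fin 3) (Fin 3) ℂ) : Matrix (Fin 3) (Fin 3) ℂ :=
  prepol₃ X U V (Z * W) + prepol₃ X (W * U) V Z - prepol₃ X W V Z * U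

/-!
Write `e A = (tr A ^ 2 - tr (A ^ 2)) / 2`, the trace of the adjugate of a 3×3 matrix `A`.
The Cayley-Hamilton identity `A ^ 3 - tr A • A ^ 2 + e A • A - det A • 1 = 0` is cubic in `A`.
Subtracting its instances at `X - Y` and (twice) at `Y` from the one at `X + Y` isolates twice the
part that is quadratic in `X` and linear in `Y`. That part says
`X ^ 2 * Y + X * Y * X + Y * X ^ 2 = pol X Y`, so `pol` becomes a noncommutative polynomial without
traces. After this substitution `pol₂ X Y Z` collapses to `3 • (X ^ 2 * Z * Y ^ 2)`; polarizing
it in `Y` produces the anticommutator `U * V + V * U`, and the three anticommutators in `pol₃` leave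
only the monomial `W * U * V`.
-/

section Ring

variable {A : Type*}

/-- The component of `(x + y) ^ 3` quadratic in `x` and linear in `y`, with the order of the
factors kept. On 3×3 matrices it replaces `pol`, whose definition involves traces. -/
def polarizedCube [Semiring A] (x y : A) : A :=
  x * x * y + x * y * x + y * x * x

variable [Ring A]

lemma polarizedCube_combination (x y z : A) :
    polarizedCube y (x * x * z) + x * polarizedCube y (x * z) - polarizedCube x (y * y) * z
      - polarizedCube x y * z * y + x * x * polarizedCube y z = 3 • (x * x * z * (y * y)) := by
  simp only [polarizedCube]
  noncomm_ring

lemma anticommutator_combination (u v w : A) :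
    w * (u * v + v * u) + (w * u * v + v * (w * u)) - (w * v + v * w) * u
      = 2 • (w * u * v) := by
  noncomm_ring

end Ring

section CayleyHamilton

variable {R : Type*} [CommRing R] (X Y : Matrix (Fin 3) (Fin 3) R)

lemma two_mul_trace_adjugate_fin_three :
    2 * trace (adjugate X) = trace X ^ 2 - trace (X * X) := by
  simp only [adjugate_fin_three, trace_fin_three, mul_apply, Fin.sum_univ_three, of_apply,
    cons_val]
  ring

lemma trace_adjugate_add_fin_three :
    trace (adjugate (X + Y)) =
      trace (adjugate X) + trace (adjugate Y) + (trace X * trace Y - trace (X * Y)) := by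
  simp only [adjugate_fin_three, trace_fin_three, mul_apply, Fin.sum_univ_three, of_apply,
    cons_val, Matrix.add_apply]
  ring

lemma det_add_fin_three :
    det (X + Y) = det X + trace (adjugate X * Y) + trace (adjugate Y * X) + det Y := by
  simp only [det_fin_three, adjugate_fin_three, trace_fin_three, mul_apply, Fin.sum_univ_three,
    of_apply, cons_val, Matrix.add_apply]
  ring

lemma adjugate_fin_three_eq_sq_sub :
    adjugate X = X * X - trace X • X + trace (adjugate X) • (1 : Matrix (Fin 3) (Fin 3) R) := by
  ext i j
  fin_cases i <;> fin_cases j <;>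
    simp only [adjugate_fin_three, trace_fin_three, Matrix.add_apply, Matrix.sub_apply,
      Matrix.smul_apply, mul_apply, one_apply, smul_eq_mul, Fin.sum_univ_three, of_apply, cons_val,
      Fin.zero_eta, Fin.mk_one, Fin.reduceFinMk, Fin.reduceEq, Fin.isValue, ↓reduceIte] <;>
    ring

lemma cayley_hamilton_fin_three :
    X * X * X = trace X • (X * X) - trace (adjugate X) • X
      + det X • (1 : Matrix (Fin 3) (Fin 3) R) := by
  have h := adjugate_mul X
  rw [adjugate_fin_three_eq_sq_sub] at h
  simp only [add_mul, sub_mul, smul_mul_assoc, one_mul] at h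
  rw [← h]
  abel

lemma trace_adjugate_mul_fin_three :
    trace (adjugate X * Y) =
      trace (Y * X * X) - trace X * trace (X * Y) + trace Y * trace (adjugate X) := by
  conv_lhs => rw [adjugate_fin_three_eq_sq_sub]
  simp only [add_mul, sub_mul, smul_mul_assoc, one_mul, trace_add, trace_sub, trace_smul,
    smul_eq_mul, ← trace_mul_cycle X X Y]
  ring

theorem polarized_cayley_hamilton_fin_three [Invertible (2 : R)] :
    polarizedCube X Y =
      trace X • (Y * X + X * Y) + trace Y • (X * X)
        + (trace (X * Y) - trace X * trace Y) • X - trace (adjugate X) • Y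
        + trace (adjugate X * Y) • (1 : Matrix (Fin 3) (Fin 3) R) := by
  have h_add := cayley_hamilton_fin_three (X + Y)
  have h_sub := cayley_hamilton_fin_three (X + -Y)
  have h_Y := cayley_hamilton_fin_three Y
  have h_adj_neg : adjugate (-Y) = adjugate Y := by
    simpa using adjugate_smul (-1 : R) Y
  simp only [trace_adjugate_add_fin_three, det_add_fin_three, trace_add, trace_neg, h_adj_neg,
    mul_add, add_mul, mul_neg, neg_mul, det_neg, Fintype.card_fin] at h_add h_sub
  refine (isUnit_of_invertible (2 : R)).smul_left_cancel.mp ?_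
  rw [polarizedCube]
  linear_combination (norm := module) h_add - h_sub - (2 : R) • h_Y

end CayleyHamilton

lemma pol_eq_polarizedCube (X Y : Matrix (Fin 3) (Fin 3) ℂ) : pol X Y = polarizedCube X Y := by
  have h_adj : trace (adjugate X) = (trace X ^ 2 - trace (X * X)) / 2 := by
    rw [← two_mul_trace_adjugate_fin_three]
    ring
  rw [polarized_cayley_hamilton_fin_three, trace_adjugate_mul_fin_three, h_adj, pol]
  module

lemma pol₂_eq (X Y Z : Matrix (Fin 3) (Fin 3) ℂ) : pol₂ X Y Z = 3 • (X * X * Z * (Y * Y)) := by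
  simp only [pol₂, pol_eq_polarizedCube, polarizedCube_combination]

lemma prepol₃_eq (X U V Z : Matrix (Fin 3) (Fin 3) ℂ) :
    prepol₃ X U V Z = 3 • (X * X * Z * (U * V + V * U)) := by
  simp only [prepol₃, pol₂_eq]
  noncomm_ring

/-- STEP 2: `6·X²ZWUV = pol₃(X,U,V,W,Z)`. -/
theorem step2_reduction (X U V W Z : Matrix (Fin 3) (Fin 3) ℂ) :
    (6 : ℂ) • (X * X * Z * W * U * V) = pol₃ X U V W Z := by
  symm
  calc pol₃ X U V W Z
      = 3 • (X * X * (Z * W) * (U * V + V * U)) + 3 • (X * X * Z * (W * U * V + V * (W * U)))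
          - 3 • (X * X * Z * (W * V + V * W)) * U := by
        simp only [pol₃, prepol₃_eq]
    _ = 3 • (X * X * Z
          * (W * (U * V + V * U) + (W * U * V + V * (W * U)) - (W * V + V * W) * U)) := by
        noncomm_ring
    _ = 3 • (X * X * Z * (2 • (W * U * V))) := by
        rw [anticommutator_combination]
    _ = (6 : ℂ) • (X * X * Z * W * U * V) := by
        simp only [mul_smul_comm, ← mul_assoc]
        module
end
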